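/- Fisher information is lower semi-continuous with respect to weak convergence: if random variables X_n converge weakly in distribution to X, then I(X) ≤ liminf_n I(X_n). -/

import Mathlib

open MeasureTheory Real Filter

open scoped ENNReal

/-- The Fisher information of a probability measure on `ℝ`: the (extended-real-valued)
integral `∫ p'²/p` over `{p > 0}` if the measure has an absolutely continuous density `p`
with Radon–Nikodym derivative `p'`, and `+∞` otherwise (infimum over an empty family). -/
noncomputable def fisherInfo (μ : Measure ℝ) : ℝ≥0∞ :=
  ⨅ (p : ℝ → ℝ) (_ : μ = volume.withDensity (fun x => ENNReal.ofReal (p x)))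
    (p' : ℝ → ℝ) (_ : ∀ a b : ℝ, p b - p a = ∫ x in a..b, p' x),
      ∫⁻ x in {x | 0 < p x}, ENNReal.ofReal ((p' x) ^ 2 / p x)


/-- The tail integral of a test function. -/
noncomputable def tailInt (ψ : ℝ → ℝ) (x : ℝ) : ℝ := ∫ y in Set.Ici x, ψ y

lemma tailInt_fubini (ν : Measure ℝ) [SFinite ν] (g ψ : ℝ → ℝ) (hg : Integrable g ν)
    (hψ : Integrable ψ) :
    ∫ y, ψ y * ∫ x in Set.Iic y, g x ∂ν = ∫ x, g x * tailInt ψ x ∂ν := by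
  have hS : MeasurableSet {z : ℝ × ℝ | z.2 ≤ z.1} :=
    measurableSet_le measurable_snd measurable_fst
  have hint : Integrable (Function.uncurry (fun y x : ℝ =>
      {z : ℝ × ℝ | z.2 ≤ z.1}.indicator (fun z => ψ z.1 * g z.2) (y, x)))
      (volume.prod ν) := by
    exact (hψ.mul_prod hg).indicator hS
  have h := integral_integral_swap hint
  convert h using 1
  · congr 1; ext y
    rw [← integral_indicator measurableSet_Iic, ← integral_const_mul]
    congr 1; ext x
    by_cases hx : x ≤ y <;> simp [Set.indicator, hx]
  · congr 1; ext x
    rw [tailInt, ← integral_indicator measurableSet_Ici, ← integral_const_mul]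
    congr 1; ext y
    by_cases hx : x ≤ y <;> simp [Set.indicator, hx, mul_comm]

lemma tailInt_bound (ψ : ℝ → ℝ) (hψ : Integrable ψ) (x : ℝ) :
    |tailInt ψ x| ≤ ∫ y, |ψ y| := by
  unfold tailInt
  refine (norm_integral_le_integral_norm (μ := volume.restrict (Set.Ici x)) ψ).trans ?_
  exact setIntegral_le_integral hψ.norm (Eventually.of_forall fun y => norm_nonneg _)

lemma tailInt_continuous (ψ : ℝ → ℝ) (hψ : Integrable ψ) : Continuous (tailInt ψ) := by
  have : tailInt ψ = fun x => (∫ y in Set.Ioi (0:ℝ), ψ y) - ∫ y in (0:ℝ)..x, ψ y := by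
    ext x
    rw [tailInt, integral_Ici_eq_integral_Ioi]
    have := intervalIntegral.integral_interval_add_Ioi (a := 0) (b := x)
      (hψ.integrableOn (s := Set.Ioi 0)) (hψ.integrableOn (s := Set.Ioi x))
    linarith
  rw [this]
  exact continuous_const.sub (intervalIntegral.continuous_primitive
    (fun a b => hψ.intervalIntegrable) 0)

lemma hilbert_factor {E H : Type*} [AddCommGroup E] [Module ℝ E] [NormedAddCommGroup H]
    [InnerProductSpace ℝ H] [CompleteSpace H] (T : E →ₗ[ℝ] H) (L : E →ₗ[ℝ] ℝ) (M : ℝ)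
    (hM : 0 ≤ M) (h : ∀ x, |L x| ≤ M * ‖T x‖) :
    ∃ g : H, ‖g‖ ≤ M ∧ ∀ x, L x = inner ℝ g (T x) := by
  obtain ⟨s, hs⟩ := LinearMap.exists_rightInverse_of_surjective T.rangeRestrict
    (LinearMap.range_rangeRestrict T)
  have hs' : ∀ y : LinearMap.range T, T (s y) = y := fun y => by
    have := congrArg (fun f => (f y : H)) hs
    simpa using this
  let f : StrongDual ℝ (LinearMap.range T) := (L ∘ₗ s).mkContinuous M (fun y => by
    have := h (s y)
    rw [hs'] at this
    simpa using this)
  obtain ⟨G, hG, hGn⟩ := exists_extension_norm_eq (𝕜 := ℝ) (LinearMap.range T) f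
  refine ⟨(InnerProductSpace.toDual ℝ H).symm G, ?_, fun x => ?_⟩
  · rw [LinearIsometryEquiv.norm_map, hGn]
    exact LinearMap.mkContinuous_norm_le _ hM _
  · rw [InnerProductSpace.toDual_symm_apply]
    have h1 := hG ⟨T x, x, rfl⟩
    rw [show G (T x) = f ⟨T x, x, rfl⟩ from h1]
    have h2 := h (x - s ⟨T x, x, rfl⟩)
    rw [map_sub, map_sub, hs'] at h2
    simp only [sub_self, norm_zero, mul_zero] at h2
    have := abs_nonpos_iff.1 h2
    change L x = L (s _)
    linarith

/-- positive part formula -/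
lemma posPart_formula (p p' : ℝ → ℝ) (hp' : LocallyIntegrable p')
    (h : ∀ a b : ℝ, p b - p a = ∫ x in a..b, p' x) (a b : ℝ) :
    max (p b) 0 - max (p a) 0 = ∫ x in a..b, {x | 0 < p x}.indicator p' x := by
  have hii : ∀ a b, IntervalIntegrable p' volume a b := fun a b =>
    (hp'.integrableOn_isCompact isCompact_uIcc).intervalIntegrable
  have hpe : p = fun x => p a + ∫ t in a..x, p' t := by
    ext x; rw [← h]; ring
  have hpc : Continuous p := by
    rw [hpe]; exact continuous_const.add (intervalIntegral.continuous_primitive hii a)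
  have hac : AbsolutelyContinuousOnInterval (fun x => max (p x) 0) a b := by
    have h1 := (hii a b).absolutelyContinuousOnInterval_intervalIntegral (c := a) (by simp)
    refine squeeze_zero (fun t => Finset.sum_nonneg fun i hi => dist_nonneg) (fun t => ?_) h1
    refine Finset.sum_le_sum fun i hi => ?_
    rw [Real.dist_eq, Real.dist_eq]
    refine (abs_max_sub_max_le_abs _ _ _).trans (le_of_eq ?_)
    congr 1
    beta_reduce
    rw [← h a, ← h a]; ring
  rw [← hac.integral_deriv_eq_sub]
  apply intervalIntegral.integral_congr_ae
  have hd : ∀ᵐ x : ℝ, HasDerivAt p (p' x) x := by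
    filter_upwards [_root_.LocallyIntegrable.ae_hasDerivAt_integral hp'] with x hx
    rw [hpe]; exact (hx a).const_add _
  filter_upwards [hd] with x hx _
  by_cases hpx : 0 < p x
  · have : (fun x => max (p x) 0) =ᶠ[nhds x] p := by
      filter_upwards [hpc.continuousAt.eventually (lt_mem_nhds hpx)] with y hy
      exact max_eq_left hy.le
    rw [this.deriv_eq, hx.deriv]
    simp [Set.indicator, hpx]
  · have : IsLocalMin (fun x => max (p x) 0) x := by
      refine Eventually.of_forall fun y => ?_
      simp only
      rw [max_eq_right (not_lt.1 hpx)]; exact le_max_right _ _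
    rw [this.deriv_eq_zero]
    simp [Set.indicator, hpx]

lemma density_locInt (μ : Measure ℝ) [IsProbabilityMeasure μ] (p p' : ℝ → ℝ)
    (hμ : μ = volume.withDensity (fun x => ENNReal.ofReal (p x)))
    (h : ∀ a b : ℝ, p b - p a = ∫ x in a..b, p' x) : LocallyIntegrable p' := by
  by_contra hcon
  obtain ⟨x, hx⟩ : ∃ x, ¬ IntegrableAtFilter p' (nhds x) volume := by
    by_contra! hh; exact hcon hh
  have key : ∀ a b, a < x → x < b → p b = p a := fun a b ha hb => by
    have : ¬ IntervalIntegrable p' volume a b := fun hi => hx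
      ⟨Set.Ioc a b, Ioc_mem_nhds ha hb, by
        rwa [intervalIntegrable_iff_integrableOn_Ioc_of_le (ha.trans hb).le] at hi⟩
    have h1 := h a b
    rw [intervalIntegral.integral_undef this] at h1
    linarith
  have hae : ∀ᵐ y : ℝ, ENNReal.ofReal (p y) = ENNReal.ofReal (p (x - 1)) := by
    have : ∀ᵐ y : ℝ, y ≠ x := by simp [ae_iff, measure_singleton]
    filter_upwards [this] with y hy
    rcases lt_or_gt_of_ne hy with hy | hy
    · rw [← key y (x+1) hy (by linarith), key (x-1) (x+1) (by linarith) (by linarith)]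
    · rw [key (x-1) y (by linarith) hy]
  have h1 : μ Set.univ = 1 := measure_univ
  rw [hμ, withDensity_congr_ae hae, withDensity_const] at h1
  simp only [Measure.smul_apply, Real.volume_univ, smul_eq_mul] at h1
  by_cases h0 : ENNReal.ofReal (p (x - 1)) = 0
  · simp [h0] at h1
  · rw [ENNReal.mul_top h0] at h1; simp at h1

lemma fisher_forward (μ : Measure ℝ) [IsProbabilityMeasure μ] (C : ℝ)
    (hC : fisherInfo μ < ENNReal.ofReal C) (ψ : ℝ → ℝ) (hψ : Integrable ψ) :
    (∫ x, ψ x ∂μ) ^ 2 ≤ C * ∫ x, (tailInt ψ x) ^ 2 ∂μ := by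
  unfold fisherInfo at hC
  simp only [iInf_lt_iff] at hC
  obtain ⟨p, hp, p', hp', hJ⟩ := hC
  have hloc := density_locInt μ p p' hp hp'
  have hpos := posPart_formula p p' hloc hp'
  have hii : ∀ a b, IntervalIntegrable p' volume a b := fun a b =>
    (hloc.integrableOn_isCompact isCompact_uIcc).intervalIntegrable
  have hpc : Continuous p := by
    have hpe : p = fun x => p 0 + ∫ t in (0:ℝ)..x, p' t := by
      ext x; rw [← hp']; ring
    rw [hpe]; exact continuous_const.add (intervalIntegral.continuous_primitive hii 0)
  have hSm : MeasurableSet {x | 0 < p x} := measurableSet_lt measurable_const hpc.measurable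
  set q : ℝ → ℝ := {x | 0 < p x}.indicator p' with hq
  set P : ℝ → ℝ := fun x => max (p x) 0 with hP
  have hPc : Continuous P := hpc.max continuous_const
  have hP0 : ∀ x, 0 ≤ P x := fun x => le_max_right _ _
  have hofP : (fun x => ENNReal.ofReal (p x)) = fun x => ENNReal.ofReal (P x) := by
    ext x; simp [hP, ENNReal.ofReal_max]
  have hp2 : μ = volume.withDensity (fun x => ENNReal.ofReal (P x)) := by rw [← hofP]; exact hp
  have hofm : Measurable (fun x => ENNReal.ofReal (P x)) := hPc.measurable.ennreal_ofReal
  have hPint : Integrable P := by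
    rw [← lintegral_ofReal_ne_top_iff_integrable hPc.aestronglyMeasurable
      (Eventually.of_forall hP0)]
    have h1 : μ Set.univ = 1 := measure_univ
    rw [hp2, withDensity_apply _ MeasurableSet.univ, Measure.restrict_univ] at h1
    rw [h1]; simp
  have hqm : AEStronglyMeasurable q volume := hloc.aestronglyMeasurable.indicator hSm
  set r : ℝ → ℝ := fun x => q x ^ 2 / P x with hr
  have hr0 : ∀ x, 0 ≤ r x := fun x => div_nonneg (sq_nonneg _) (hP0 x)
  have hrm : AEStronglyMeasurable r volume :=
    ((hqm.aemeasurable.pow_const 2).div hPc.aemeasurable).aestronglyMeasurable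
  have hrl : ∫⁻ x, ENNReal.ofReal (r x) < ENNReal.ofReal C := by
    refine lt_of_eq_of_lt ?_ hJ
    rw [← lintegral_indicator hSm]
    congr 1; ext x
    by_cases hx : 0 < p x
    · simp [Set.indicator, hx, hr, hq, hP, max_eq_left hx.le]
    · simp [Set.indicator, hx, hr, hq]
  have hrint : Integrable r :=
    (lintegral_ofReal_ne_top_iff_integrable hrm (Eventually.of_forall hr0)).1
      (hrl.trans ENNReal.ofReal_lt_top).ne
  have hC0 : 0 < C := by
    by_contra hh
    rw [ENNReal.ofReal_of_nonpos (not_lt.1 hh)] at hrl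
    simp at hrl
  have hJC : ∫ x, r x ≤ C := by
    rw [integral_eq_lintegral_of_nonneg_ae (Eventually.of_forall hr0) hrm]
    exact ENNReal.toReal_le_of_le_ofReal hC0.le hrl.le
  -- pointwise inequality
  have hpt : ∀ x s : ℝ, 0 ≤ s ^ 2 * P x - 2 * (q x * s) + r x := fun x s => by
    by_cases hx : 0 < p x
    · have hPx : 0 < P x := lt_max_of_lt_left hx
      have : s ^ 2 * P x - 2 * (q x * s) + r x = (s * P x - q x) ^ 2 / P x := by
        simp only [hr]; field_simp; ring
      rw [this]; positivity
    · have hq0 : q x = 0 := by simp [hq, hx]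
      have := hr0 x
      have := hP0 x
      rw [hq0]; nlinarith [mul_nonneg (sq_nonneg s) this]
  have hqint : Integrable q := by
    refine (hrint.add hPint).mono' hqm (Eventually.of_forall fun x => ?_)
    rw [Real.norm_eq_abs]
    have h1 := hpt x 1
    have h2 := hpt x (-1)
    have := hr0 x
    have := hP0 x
    simp only [Pi.add_apply]
    rw [abs_le]; constructor <;> nlinarith
  have hPq : ∀ y, P y = ∫ x in Set.Iic y, q x := fun y => by
    have h1 : Tendsto (fun a => ∫ x in a..y, q x) atBot (nhds (∫ x in Set.Iic y, q x)) :=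
      intervalIntegral_tendsto_integral_Iic y hqint.integrableOn tendsto_id
    have h2 : Tendsto P atBot (nhds (P y - ∫ x in Set.Iic y, q x)) := by
      have : P = fun a => P y - ∫ x in a..y, q x := by
        ext a; rw [← hpos a y]; simp only [hP]; ring
      rw [this]
      simpa using tendsto_const_nhds.sub h1
    have h3 := IntegrableAtFilter.eq_zero_of_tendsto (μ := volume)
      (hPint.integrableAtFilter atBot) (fun s hs => by
        obtain ⟨a, ha⟩ := mem_atBot_sets.1 hs
        exact top_le_iff.1 (by
          rw [← Real.volume_Iic (a := a)]; exact measure_mono fun b hb => ha b hb)) h2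
    linarith
  have hwd : ∀ f : ℝ → ℝ, ∫ x, f x ∂μ = ∫ x, P x * f x := fun f => by
    conv_lhs => rw [hp2]
    rw [integral_withDensity_eq_integral_toReal_smul hofm
      (Eventually.of_forall fun x => ENNReal.ofReal_lt_top)]
    congr 1; ext x
    rw [ENNReal.toReal_ofReal (hP0 x), smul_eq_mul]
  have hA : ∫ x, ψ x ∂μ = ∫ x, q x * tailInt ψ x := by
    rw [hwd, ← tailInt_fubini volume q ψ hqint hψ]
    congr 1; ext y
    rw [← hPq]; ring
  have hTc := tailInt_continuous ψ hψ
  have hTb := tailInt_bound ψ hψ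
  have hqT : Integrable (fun x => q x * tailInt ψ x) :=
    hqint.mul_bdd (c := ∫ y, |ψ y|) hTc.aestronglyMeasurable
      (Eventually.of_forall fun x => hTb x)
  have hPT : Integrable (fun x => P x * tailInt ψ x ^ 2) :=
    hPint.mul_bdd (c := (∫ y, |ψ y|) ^ 2) (hTc.pow 2).aestronglyMeasurable
      (Eventually.of_forall fun x => by
        rw [norm_pow]; exact pow_le_pow_left₀ (norm_nonneg _) (hTb x) 2)
  rw [hA, hwd]
  set A := ∫ x, q x * tailInt ψ x
  set B := ∫ x, P x * tailInt ψ x ^ 2 with hB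
  have hB0 : 0 ≤ B := integral_nonneg fun x => mul_nonneg (hP0 x) (sq_nonneg _)
  have hquad : ∀ t : ℝ, 0 ≤ B * (t * t) + (-2 * A) * t + ∫ x, r x := fun t => by
    have h1 : 0 ≤ ∫ x, ((P x * tailInt ψ x ^ 2) * (t * t)
        + (q x * tailInt ψ x) * (-2 * t) + r x) :=
      integral_nonneg fun x => by
        have := hpt x (t * tailInt ψ x)
        simp only [Pi.zero_apply]
        linarith
    rw [integral_add ((hPT.mul_const _).fun_add (hqT.mul_const _)) hrint,
      integral_add (hPT.mul_const _) (hqT.mul_const _), integral_mul_const,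
      integral_mul_const] at h1
    linarith
  have hd := discrim_le_zero hquad
  rw [discrim] at hd
  nlinarith [mul_le_mul_of_nonneg_left hJC hB0]

open scoped CompactlySupported in
lemma fisher_backward (μ : Measure ℝ) [IsProbabilityMeasure μ] (C : ℝ) (hC : 0 ≤ C)
    (h : ∀ ψ : C_c(ℝ, ℝ), (∫ x, ψ x ∂μ) ^ 2 ≤ C * ∫ x, (tailInt ψ x) ^ 2 ∂μ) :
    fisherInfo μ ≤ ENNReal.ofReal C := by
  have hψi : ∀ ψ : C_c(ℝ, ℝ), Integrable ψ := fun ψ => ψ.integrable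
  have hmem : ∀ ψ : C_c(ℝ, ℝ), MemLp (tailInt ψ) 2 μ := fun ψ =>
    MemLp.of_bound (tailInt_continuous ψ (hψi ψ)).aestronglyMeasurable (∫ y, |ψ y|)
      (Eventually.of_forall fun x => tailInt_bound ψ (hψi ψ) x)
  have hadd : ∀ ψ φ : C_c(ℝ, ℝ), tailInt (ψ + φ : C_c(ℝ, ℝ)) = tailInt ψ + tailInt φ :=
    fun ψ φ => by
      ext x
      simp only [tailInt, Pi.add_apply, CompactlySupportedContinuousMap.coe_add]
      exact integral_add (hψi ψ).integrableOn (hψi φ).integrableOn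
  have hsmul : ∀ (c : ℝ) (ψ : C_c(ℝ, ℝ)), tailInt (c • ψ : C_c(ℝ, ℝ)) = c • tailInt ψ :=
    fun c ψ => by
      ext x
      simp only [tailInt, Pi.smul_apply, CompactlySupportedContinuousMap.coe_smul]
      exact integral_smul c _
  let T : C_c(ℝ, ℝ) →ₗ[ℝ] Lp ℝ 2 μ :=
    { toFun := fun ψ => (hmem ψ).toLp
      map_add' := fun ψ φ => by
        rw [← MemLp.toLp_add]
        exact MemLp.toLp_congr _ _ (by rw [hadd])
      map_smul' := fun c ψ => by
        rw [RingHom.id_apply, ← MemLp.toLp_const_smul]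
        exact MemLp.toLp_congr _ _ (by rw [hsmul]) }
  let L : C_c(ℝ, ℝ) →ₗ[ℝ] ℝ :=
    { toFun := fun ψ => ∫ x, ψ x ∂μ
      map_add' := fun ψ φ => integral_add ψ.integrable φ.integrable
      map_smul' := fun c ψ => integral_smul c _ }
  have hinner : ∀ (g : Lp ℝ 2 μ) ψ, inner ℝ g (T ψ) = ∫ x, g x * tailInt ψ x ∂μ := fun g ψ => by
    rw [L2.inner_def]
    apply integral_congr_ae
    filter_upwards [(hmem ψ).coeFn_toLp] with x hx
    change inner ℝ (g x) (((hmem ψ).toLp : Lp ℝ 2 μ) x) = _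
    rw [hx]; simp [mul_comm]
  have hnorm : ∀ ψ, ‖T ψ‖ ^ 2 = ∫ x, (tailInt ψ x) ^ 2 ∂μ := fun ψ => by
    rw [← real_inner_self_eq_norm_sq, hinner]
    apply integral_congr_ae
    filter_upwards [(hmem ψ).coeFn_toLp] with x hx
    change (((hmem ψ).toLp : Lp ℝ 2 μ) x) * _ = _
    rw [hx]; ring
  obtain ⟨g, hgn, hgL⟩ := hilbert_factor T L (Real.sqrt C) (Real.sqrt_nonneg _) (fun ψ => by
    apply abs_le_of_sq_le_sq _ (by positivity)
    rw [mul_pow, Real.sq_sqrt hC, hnorm]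
    exact h ψ)
  have hgmem : MemLp g 2 μ := Lp.memLp g
  have hgint : Integrable g μ := hgmem.integrable (by norm_num)
  have hgsm : StronglyMeasurable (g : ℝ → ℝ) := Lp.stronglyMeasurable g
  have hg2 : ∫⁻ x, ENNReal.ofReal (g x ^ 2) ∂μ ≤ ENNReal.ofReal C := by
    have h1 : ∫ x, g x ^ 2 ∂μ = ‖g‖ ^ 2 := by
      rw [← real_inner_self_eq_norm_sq, L2.inner_def]
      congr 1; ext x; simp [pow_two]
    rw [← ofReal_integral_eq_lintegral_ofReal hgmem.integrable_sq
      (Eventually.of_forall fun x => sq_nonneg _), h1]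
    apply ENNReal.ofReal_le_ofReal
    calc ‖g‖ ^ 2 ≤ (Real.sqrt C) ^ 2 := pow_le_pow_left₀ (norm_nonneg _) hgn 2
      _ = C := Real.sq_sqrt hC
  set p : ℝ → ℝ := fun y => ∫ x in Set.Iic y, g x ∂μ with hp
  have hpm : Measurable p := by
    have hS : MeasurableSet {z : ℝ × ℝ | z.2 ≤ z.1} :=
      measurableSet_le measurable_snd measurable_fst
    have h1 : StronglyMeasurable ({z : ℝ × ℝ | z.2 ≤ z.1}.indicator (fun z => g z.2)) :=
      (hgsm.comp_measurable measurable_snd).indicator hS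
    have h2 := (h1.integral_prod_right' (ν := μ)).measurable
    convert h2 using 1
    ext y
    rw [hp]
    simp only
    rw [← integral_indicator measurableSet_Iic]
    rfl
  have hpb : ∀ y, |p y| ≤ ∫ x, |g x| ∂μ := fun y => by
    refine (norm_integral_le_integral_norm (μ := μ.restrict (Set.Iic y)) g).trans ?_
    exact setIntegral_le_integral hgint.norm (Eventually.of_forall fun y => norm_nonneg _)
  set M := ∫ x, |g x| ∂μ with hM
  have hfub : ∀ ψ : C_c(ℝ, ℝ), ∫ x, ψ x ∂μ = ∫ y, ψ y * p y := fun ψ => by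
    rw [hp, tailInt_fubini μ g ψ hgint (hψi ψ), ← hinner]
    exact hgL ψ
  have hlf : ∀ f : ℝ → ℝ, (∀ x, f x ≤ M) →
      IsLocallyFiniteMeasure (volume.withDensity fun x => ENNReal.ofReal (f x)) := fun f hf => by
    have h1 : (volume.withDensity fun x => ENNReal.ofReal (f x))
        ≤ (M.toNNReal : NNReal) • (volume : Measure ℝ) := by
      refine (withDensity_mono (Eventually.of_forall fun x =>
        ENNReal.ofReal_le_ofReal (hf x))).trans ?_
      rw [withDensity_const]; rfl
    exact Measure.isLocallyFiniteMeasure_of_le h1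
  have hlf1 := hlf p fun x => (abs_le.1 (hpb x)).2
  have hlf2 := hlf (fun x => - p x) fun x => by linarith [(abs_le.1 (hpb x)).1]
  have hofm1 : Measurable fun x => ENNReal.ofReal (p x) := hpm.ennreal_ofReal
  have hofm2 : Measurable fun x => ENNReal.ofReal (- p x) := hpm.neg.ennreal_ofReal
  have hmeas : μ + volume.withDensity (fun x => ENNReal.ofReal (- p x))
      = volume.withDensity (fun x => ENNReal.ofReal (p x)) := by
    have hlf3 : IsLocallyFiniteMeasure
        (μ + volume.withDensity (fun x => ENNReal.ofReal (- p x))) := ⟨fun x => by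
      obtain ⟨s, hs, hs'⟩ := hlf2.finiteAtNhds x
      exact ⟨s, hs, by
        rw [Measure.add_apply]; exact ENNReal.add_lt_top.2 ⟨measure_lt_top _ _, hs'⟩⟩⟩
    apply Measure.ext_of_integral_eq_on_compactlySupported
    intro ψ
    rw [integral_add_measure ψ.integrable ψ.integrable, hfub,
      integral_withDensity_eq_integral_toReal_smul hofm2
        (Eventually.of_forall fun x => ENNReal.ofReal_lt_top),
      integral_withDensity_eq_integral_toReal_smul hofm1
        (Eventually.of_forall fun x => ENNReal.ofReal_lt_top)]
    have hi1 : Integrable (fun y => ψ y * p y) :=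
      (hψi ψ).mul_bdd (c := M) hpm.aestronglyMeasurable (Eventually.of_forall fun x => hpb x)
    have hi2 : Integrable (fun y => (ENNReal.ofReal (- p y)).toReal • ψ y) :=
      (hψi ψ).bdd_mul (c := M) hofm2.ennreal_toReal.aestronglyMeasurable
        (Eventually.of_forall fun x => by
          rw [ENNReal.toReal_ofReal', Real.norm_eq_abs, abs_of_nonneg (le_max_right _ _)]
          exact max_le ((neg_le_abs _).trans (hpb x)) ((abs_nonneg _).trans (hpb x)))
    rw [← integral_add hi1 hi2]
    congr 1; ext y
    simp only [ENNReal.toReal_ofReal', smul_eq_mul]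
    rcases le_total 0 (p y) with h0 | h0
    · rw [max_eq_left h0, max_eq_right (by linarith)]; ring
    · rw [max_eq_right h0, max_eq_left (by linarith)]; ring
  have hneg : volume {x | p x < 0} = 0 := by
    have hSm : MeasurableSet {x | p x < 0} := measurableSet_lt hpm measurable_const
    have h1 : volume.withDensity (fun x => ENNReal.ofReal (p x)) {x | p x < 0} = 0 := by
      rw [withDensity_apply_eq_zero hofm1]
      have : {x | ENNReal.ofReal (p x) ≠ 0} ∩ {x | p x < 0} = ∅ := by
        ext x; simp; intro h1; linarith
      rw [this, measure_empty]
    rw [← hmeas, Measure.add_apply] at h1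
    have h2 := (add_eq_zero.1 h1).2
    rw [withDensity_apply_eq_zero hofm2] at h2
    convert h2
    ext x; simp
  have hp0 : ∀ᵐ x, 0 ≤ p x := by
    rw [ae_iff]; simpa using hneg
  have hμ : μ = volume.withDensity (fun x => ENNReal.ofReal (p x)) := by
    rw [← hmeas]
    have : volume.withDensity (fun x => ENNReal.ofReal (- p x)) = 0 := by
      have h1 : (fun x => ENNReal.ofReal (- p x)) =ᵐ[volume] 0 := by
        filter_upwards [hp0] with x hx
        simp [hx]
      rw [withDensity_congr_ae h1, withDensity_zero]
    rw [this, add_zero]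
  have hI : ∀ (f : ℝ → ℝ) (s : Set ℝ), ∫ x in s, f x ∂μ
      = ∫ x in s, f x ∂(volume.withDensity (fun x => ENNReal.ofReal (p x))) := fun f s => by
    rw [← hμ]
  have hI2 : ∀ (f : ℝ → ℝ≥0∞), ∫⁻ x, f x ∂μ
      = ∫⁻ x, f x ∂(volume.withDensity (fun x => ENNReal.ofReal (p x))) := fun f => by
    rw [← hμ]
  unfold fisherInfo
  refine iInf_le_of_le p (iInf_le_of_le hμ (iInf_le_of_le (fun x => g x * p x)
    (iInf_le_of_le ?_ ?_)))
  · have key : ∀ a b, a ≤ b → p b - p a = ∫ x in a..b, g x * p x := fun a b hab => by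
      rw [hp]
      simp only
      rw [intervalIntegral.integral_Iic_sub_Iic hgint.integrableOn hgint.integrableOn,
        intervalIntegral.integral_of_le hab, intervalIntegral.integral_of_le hab]
      rw [hI, setIntegral_withDensity_eq_setIntegral_toReal_smul hofm1
        (Eventually.of_forall fun x => ENNReal.ofReal_lt_top) _ measurableSet_Ioc]
      apply integral_congr_ae
      filter_upwards [ae_restrict_of_ae hp0] with x hx
      rw [ENNReal.toReal_ofReal hx, smul_eq_mul, mul_comm]
    intro a b
    rcases le_total a b with hab | hab
    · exact key a b hab
    · rw [intervalIntegral.integral_symm, ← key b a hab]; ring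
  · refine le_trans ?_ hg2
    rw [hI2, lintegral_withDensity_eq_lintegral_mul _ hofm1
      (hgsm.measurable.pow_const 2).ennreal_ofReal]
    refine le_trans ?_ (setLIntegral_le_lintegral {x | 0 < p x} _)
    refine setLIntegral_mono' (measurableSet_lt measurable_const hpm) fun x hx => ?_
    have hx : 0 < p x := hx
    rw [Pi.mul_apply, ← ENNReal.ofReal_mul hx.le]
    apply le_of_eq
    congr 1
    field_simp

theorem fisherInfo_le_liminf_of_tendsto
    (μn : ℕ → ProbabilityMeasure ℝ) (μ : ProbabilityMeasure ℝ)
    (h : Tendsto μn atTop (nhds μ)) :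
    fisherInfo (μ : Measure ℝ) ≤ liminf (fun n => fisherInfo (μn n : Measure ℝ)) atTop := by
  refine le_of_forall_gt_imp_ge_of_dense fun c hc => ?_
  rcases eq_or_ne c ⊤ with rfl | hct
  · exact le_top
  rw [← ENNReal.ofReal_toReal hct] at hc ⊢
  set C := c.toReal
  have hfr := frequently_lt_of_liminf_lt (by isBoundedDefault) hc
  refine fisher_backward μ C ENNReal.toReal_nonneg fun ψ => ?_
  rw [ProbabilityMeasure.tendsto_iff_forall_integral_tendsto] at h
  have hψ : Integrable ψ (volume : Measure ℝ) := ψ.integrable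
  obtain ⟨K, hK⟩ := ψ.hasCompactSupport.exists_bound_of_continuous ψ.continuous
  have h1 := h (BoundedContinuousFunction.ofNormedAddCommGroup ψ ψ.continuous K hK)
  have h2 := h (BoundedContinuousFunction.ofNormedAddCommGroup (fun x => tailInt ψ x ^ 2)
    ((tailInt_continuous ψ hψ).pow 2) ((∫ y, |ψ y|) ^ 2) (fun x => by
      rw [norm_pow]; exact pow_le_pow_left₀ (norm_nonneg _) (tailInt_bound ψ hψ x) 2))
  simp only [BoundedContinuousFunction.coe_ofNormedAddCommGroup] at h1 h2
  exact le_of_tendsto_of_tendsto_of_frequently (h1.pow 2) (h2.const_mul C)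
    (hfr.mono fun n hn => fisher_forward (μn n) C hn ψ hψ)
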